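/- Let n ≥ 3, let L be a weighted Laplacian of a ring graph on n vertices, and let 1 ≤ k ≤ n. Then the minimum over all nonempty subsets S of the vertices with |S| ≤ k of (1/2)·tr(L_ff⁻¹) equals the minimum over all j ∈ {1,…,k} and all sets of j distinct vertices u₁, …, u_j listed in clockwise (cyclic) order (with u_{j+1} = u₁) of the quantity Σ_{i=1}^{j} (1/2)·tr(L_{(u_i→u_{i+1})}⁻¹). -/

import Mathlib

open Matrix

/-- `L` is a weighted Laplacian of a ring graph on `n + 3` (i.e. `≥ 3`) vertices,
with indices taken modulo `n + 3`. -/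
def IsRingLaplacian {n : ℕ} (L : Matrix (Fin (n + 3)) (Fin (n + 3)) ℝ) : Prop :=
  L.IsSymm ∧
  (∀ i j : Fin (n + 3), j = i + 1 ∨ j = i - 1 → L i j < 0) ∧
  (∀ i j : Fin (n + 3), i ≠ j → j ≠ i + 1 → j ≠ i - 1 → L i j = 0) ∧
  (∀ i : Fin (n + 3), ∑ j, L i j = 0)

/-- The index set of the cyclic segment `(u → v)`: the vertices strictly between `u` and
`v` in clockwise order (all vertices other than `u` when `v = u`). -/
def CSegIdx {N : ℕ} (u v : Fin N) : Type :=
  {w : Fin N // 0 < (w - u).val ∧ (v = u ∨ (w - u).val < (v - u).val)}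

instance {N : ℕ} (u v : Fin N) : Fintype (CSegIdx u v) := by
  unfold CSegIdx; infer_instance

instance {N : ℕ} (u v : Fin N) : DecidableEq (CSegIdx u v) := by
  unfold CSegIdx; infer_instance

/-- `L_{(u→v)}`: the principal submatrix of `L` on the vertices strictly between `u` and
`v` in clockwise order. -/
def cseg {N : ℕ} (L : Matrix (Fin N) (Fin N) ℝ) (u v : Fin N) :
    Matrix (CSegIdx u v) (CSegIdx u v) ℝ :=
  L.submatrix (·.val) (·.val)

/-- The grounded Laplacian `L_ff`. -/
def grounded {N : ℕ} (L : Matrix (Fin N) (Fin N) ℝ) (S : Finset (Fin N)) :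
    Matrix {i : Fin N // i ∉ S} {i : Fin N // i ∉ S} ℝ :=
  L.submatrix (·.val) (·.val)

/-!
Deleting the vertices `u₀, …, u_j` from a ring leaves the arcs between cyclically consecutive `uᵢ`.
Walking along ring edges, one leaves an arc only through one of its endpoints, so the Laplacian has
no entry between different arcs: the grounded Laplacian is block diagonal, up to reindexing, with
blocks the segments `L_{(uᵢ → uᵢ₊₁)}`. As every block is invertible, which is the maximum principle
for a connected graph with at least one grounded vertex, the trace of the inverse is the sum of
the traces of the inverse blocks. Every nonempty vertex set has a clockwise enumeration, so the two
minima range over the same values.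
-/

section BlockTrace

variable {o m R : Type*} {ι : o → Type*} [Fintype o] [Fintype m] [DecidableEq m]
  [∀ i, Fintype (ι i)] [∀ i, DecidableEq (ι i)] [CommRing R]

lemma inv_blockDiagonal' [DecidableEq o] (B : ∀ i, Matrix (ι i) (ι i) R)
    (hB : ∀ i, IsUnit (B i).det) :
    (blockDiagonal' B)⁻¹ = blockDiagonal' fun i => (B i)⁻¹ := by
  refine inv_eq_right_inv ?_
  rw [← blockDiagonal'_mul, ← blockDiagonal'_one]
  exact congrArg blockDiagonal' (funext fun i => mul_nonsing_inv _ (hB i))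

lemma trace_inv_eq_sum_trace_inv_blocks (A : Matrix m m R) (e : (Σ i, ι i) ≃ m)
    (hzero : ∀ p q, p.1 ≠ q.1 → A (e p) (e q) = 0)
    (hdet : ∀ i, IsUnit (A.submatrix (fun a => e ⟨i, a⟩) fun a => e ⟨i, a⟩).det) :
    A⁻¹.trace = ∑ i, (A.submatrix (fun a => e ⟨i, a⟩) fun a => e ⟨i, a⟩)⁻¹.trace := by
  classical
  have hblock : A.submatrix e e =
      blockDiagonal' fun i => A.submatrix (fun a => e ⟨i, a⟩) fun a => e ⟨i, a⟩ := by
    ext ⟨i, a⟩ ⟨i', b⟩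
    obtain rfl | hne := eq_or_ne i i'
    · rw [blockDiagonal'_apply_eq, submatrix_apply, submatrix_apply]
    · rw [blockDiagonal'_apply_ne _ _ _ hne, submatrix_apply, hzero _ _ hne]
  calc A⁻¹.trace = (A⁻¹.submatrix e e).trace := (e.sum_comp fun w => A⁻¹ w w).symm
    _ = (blockDiagonal' fun i => A.submatrix (fun a => e ⟨i, a⟩) fun a => e ⟨i, a⟩)⁻¹.trace := by
      rw [← inv_submatrix_equiv, hblock]
    _ = ∑ i, (A.submatrix (fun a => e ⟨i, a⟩) fun a => e ⟨i, a⟩)⁻¹.trace := by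
      rw [inv_blockDiagonal' _ hdet, trace_blockDiagonal']

end BlockTrace

section MaximumPrinciple

variable {V ι R : Type*} [Fintype V] [Fintype ι] {L : Matrix V V R}

lemma nonpos_of_mulVec_nonpos_of_reachable [Ring R] [LinearOrder R] [IsStrictOrderedRing R]
    (hoff : ∀ i j, i ≠ j → L i j ≤ 0) (hsum : ∀ i, 0 ≤ ∑ j, L i j) {y : V → R}
    (hy : ∀ i, 0 < y i → (L *ᵥ y) i ≤ 0)
    (hreach : ∀ i, ∃ s, Relation.ReflTransGen (fun a b => L a b < 0) i s ∧ y s ≤ 0) (i : V) :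
    y i ≤ 0 := by
  by_contra! hi
  have : Nonempty V := ⟨i⟩
  obtain ⟨m, hm⟩ := Finite.exists_max y
  have hpos : 0 < y m := hi.trans_le (hm i)
  have propagate : ∀ a b, y a = y m → L a b < 0 → y b = y m := by
    intro a b ha hab
    have hterm : ∀ j ∈ Finset.univ, 0 ≤ L a j * (y j - y m) := by
      intro j _
      obtain rfl | hne := eq_or_ne a j
      · rw [ha, sub_self, mul_zero]
      · exact mul_nonneg_of_nonpos_of_nonpos (hoff a j hne) (sub_nonpos.2 (hm j))
    have hle : ∑ j, L a j * (y j - y m) ≤ 0 := by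
      simp only [mul_sub, Finset.sum_sub_distrib, ← Finset.sum_mul]
      exact sub_nonpos.2 ((hy a (ha ▸ hpos)).trans (mul_nonneg (hsum a) hpos.le))
    have hzero := (Finset.sum_eq_zero_iff_of_nonneg hterm).1
      (hle.antisymm (Finset.sum_nonneg hterm)) b (Finset.mem_univ b)
    exact sub_eq_zero.1 ((mul_eq_zero.1 hzero).resolve_left hab.ne)
  have eq_of_reachable : ∀ s, Relation.ReflTransGen (fun a b => L a b < 0) m s → y s = y m := by
    intro s hms
    induction hms with
    | refl => rfl
    | tail _ hab ih => exact propagate _ _ ih hab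
  obtain ⟨s, hms, hs⟩ := hreach m
  exact (eq_of_reachable s hms ▸ hs).not_gt hpos

lemma mulVec_extend_zero_apply [NonUnitalNonAssocSemiring R] {f : ι → V} (hf : f.Injective)
    (z : ι → R) (a : ι) : (L *ᵥ Function.extend f z 0) (f a) = (L.submatrix f f *ᵥ z) a := by
  refine (Fintype.sum_of_injective f hf _ _ (fun w hw => ?_) fun b => ?_).symm
  · rw [Function.extend_apply' _ _ _ hw, Pi.zero_apply, mul_zero]
  · exact congrArg (L (f a) (f b) * ·) (hf.extend_apply z 0 b).symm

lemma det_submatrix_ne_zero_of_reachable [DecidableEq ι] [CommRing R] [LinearOrder R]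
    [IsStrictOrderedRing R] (hoff : ∀ i j, i ≠ j → L i j ≤ 0) (hsum : ∀ i, 0 ≤ ∑ j, L i j)
    {f : ι → V} (hf : f.Injective)
    (hreach : ∀ i, ∃ s ∉ Set.range f, Relation.ReflTransGen (fun a b => L a b < 0) i s) :
    (L.submatrix f f).det ≠ 0 := by
  intro hdet
  obtain ⟨x, hx, hLx⟩ := exists_mulVec_eq_zero_iff.2 hdet
  have kernel_nonpos : ∀ z : ι → R, L.submatrix f f *ᵥ z = 0 → ∀ a, z a ≤ 0 := by
    intro z hz a
    have extend_eq_zero : ∀ w ∉ Set.range f, Function.extend f z (0 : V → R) w = 0 :=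
      fun w hw => Function.extend_apply' _ _ w hw
    rw [← hf.extend_apply z (0 : V → R) a]
    refine nonpos_of_mulVec_nonpos_of_reachable hoff hsum (fun w hw => ?_) (fun w => ?_) (f a)
    · obtain ⟨b, rfl⟩ : w ∈ Set.range f := by_contra fun h => hw.ne' (extend_eq_zero w h)
      exact ((mulVec_extend_zero_apply hf z b).trans (congrFun hz b)).le
    · obtain ⟨s, hs, hws⟩ := hreach w
      exact ⟨s, hws, (extend_eq_zero s hs).le⟩
  refine hx (funext fun a => (kernel_nonpos x hLx a).antisymm ?_)
  exact neg_nonpos.1 (kernel_nonpos (-x) (by rw [mulVec_neg, hLx, neg_zero]) a)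

end MaximumPrinciple

lemma existsUnique_lt_and_forall_gt {ι α : Type*} [LinearOrder ι] [Finite ι] [LinearOrder α]
    {a : ι → α} {x : α} (hlt : ∃ i, a i < x) (hx : x ∉ Set.range a) :
    ∃! i, a i < x ∧ ∀ l > i, x < a l := by
  obtain ⟨i, hi, hmax⟩ := (Set.toFinite {i | a i < x}).exists_maximal hlt
  refine ⟨i, ⟨hi, fun l hl => ?_⟩, fun i' ⟨hi', hgap⟩ => ?_⟩
  · refine lt_of_le_of_ne (not_lt.1 fun h => ?_) fun h => hx ⟨l, h.symm⟩
    exact hl.not_ge (hmax h hl.le)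
  · by_contra hne
    obtain h | h := lt_or_gt_of_ne hne
    · exact (hgap i h).not_gt hi
    · exact h.not_ge (hmax hi' h.le)

section CyclicInterval

variable {N : ℕ} {u v w : Fin N}

/-- The set of vertices underlying `CSegIdx u v`: the open arc travelled clockwise from `u` to `v`,
which for `v = u` is the whole ring without `u`. -/
def cyclicIoo (u v : Fin N) : Set (Fin N) :=
  {w | 0 < (w - u).val ∧ (v = u ∨ (w - u).val < (v - u).val)}

lemma cyclicIoo_of_lt (h : u < v) : cyclicIoo u v = Set.Ioo u v := by
  ext w
  have hvu := Fin.sub_val_of_le h.le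
  rw [Fin.lt_def] at h
  simp only [cyclicIoo, Set.mem_ofPred_eq, Set.mem_Ioo, Fin.ext_iff, Fin.lt_def]
  obtain hw | hw := lt_or_ge w u
  · have := Fin.coe_sub_iff_lt.2 hw
    omega
  · have := Fin.sub_val_of_le hw
    omega

variable [NeZero N]

lemma cyclicIoo_zero_right (u : Fin N) : cyclicIoo u 0 = Set.Ioi u := by
  ext w
  obtain rfl | hu := eq_or_ne u 0
  · simp [cyclicIoo]
  · have h0u := Fin.coe_sub_iff_lt.2 (Fin.pos_iff_ne_zero.2 hu)
    rw [Fin.val_zero] at h0u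
    simp only [cyclicIoo, Set.mem_ofPred_eq, Set.mem_Ioi, hu.symm, false_or, Fin.lt_def]
    obtain hw | hw := lt_or_ge w u
    · have := Fin.coe_sub_iff_lt.2 hw
      omega
    · have := Fin.sub_val_of_le hw
      rw [Fin.le_def] at hw
      omega

lemma left_notMem_cyclicIoo : u ∉ cyclicIoo u v := by
  simp [cyclicIoo]

lemma sub_mem_cyclicIoo_sub (c : Fin N) :
    w - c ∈ cyclicIoo (u - c) (v - c) ↔ w ∈ cyclicIoo u v := by
  simp only [cyclicIoo, Set.mem_ofPred_eq, sub_sub_sub_cancel_right, sub_left_inj]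

lemma add_one_mem_cyclicIoo_or_eq (hw : w ∈ cyclicIoo u v) :
    w + 1 ∈ cyclicIoo u v ∨ w + 1 = v := by
  have dist_inj : ∀ {x y : Fin N}, x = y ↔ (x - u).val = (y - u).val := by
    simp only [← Fin.ext_iff, sub_left_inj, implies_true]
  have hwrap := Fin.val_add_eq_ite (w - u) 1
  rw [Fin.val_one', sub_add_eq_add_sub] at hwrap
  simp only [cyclicIoo, Set.mem_ofPred_eq, dist_inj (y := u), dist_inj (y := v), sub_self,
    Fin.val_zero] at hw ⊢
  -- A nonempty arc forces `2 ≤ N`, so `(1 : Fin N)` does not wrap around to `0`.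
  rw [Nat.mod_eq_of_lt (by omega)] at hwrap
  split_ifs at hwrap <;> omega

open scoped Fin.CommRing Fin.NatCast in
lemma reflTransGen_of_add_one {r : Fin N → Fin N → Prop} (h : ∀ i, r i (i + 1)) (i j : Fin N) :
    Relation.ReflTransGen r i j := by
  have walk : ∀ d : ℕ, Relation.ReflTransGen r i (i + d) := by
    intro d
    induction d with
    | zero => rw [Nat.cast_zero, add_zero]
    | succ d ih => rw [Nat.cast_succ, ← add_assoc]; exact ih.tail (h _)
  simpa only [Fin.cast_val_eq_self, add_sub_cancel] using walk (j - i).val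

end CyclicInterval

section Clockwise

variable {N j : ℕ} {u : Fin (j + 1) → Fin N} {i : Fin (j + 1)} {w : Fin N}

/-- The family `u` lists distinct vertices of the ring in clockwise order, expressed through the
clockwise distances `u i - u 0` from `u 0`. -/
def IsClockwise (u : Fin (j + 1) → Fin N) : Prop :=
  StrictMono fun i => u i - u 0

namespace IsClockwise

lemma strictMono_sub (hu : IsClockwise u) : StrictMono fun i => u i - u 0 :=
  hu

lemma injective (hu : IsClockwise u) : u.Injective :=
  fun _ _ h => hu.strictMono_sub.injective (congrArg (· - u 0) h)

lemma card_image (hu : IsClockwise u) : (Finset.univ.image u).card = j + 1 := by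
  rw [Finset.card_image_of_injective _ hu.injective, Finset.card_fin]

variable [NeZero N]

lemma mem_cyclicIoo_iff (hu : IsClockwise u) :
    w ∈ cyclicIoo (u i) (u (i + 1)) ↔
      u i - u 0 < w - u 0 ∧ ∀ l > i, w - u 0 < u l - u 0 := by
  rw [← sub_mem_cyclicIoo_sub (u 0)]
  obtain rfl | hi := eq_or_ne i (Fin.last j)
  · have no_later : ∀ l > Fin.last j, w - u 0 < u l - u 0 :=
      fun l hl => absurd hl (Fin.le_last l).not_gt
    rw [Fin.last_add_one, sub_self, cyclicIoo_zero_right, Set.mem_Ioi, and_iff_left no_later]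
  · have hlt : i < i + 1 := Fin.lt_add_one_iff.2 (Fin.lt_last_iff_ne_last.2 hi)
    rw [cyclicIoo_of_lt (hu.strictMono_sub hlt), Set.mem_Ioo]
    refine and_congr_right fun _ => ⟨fun h l hl => h.trans_le ?_, fun h => h _ hlt⟩
    exact hu.strictMono_sub.monotone (Fin.add_one_le_of_lt hl)

lemma notMem_range_of_mem_cyclicIoo (hu : IsClockwise u) (hw : w ∈ cyclicIoo (u i) (u (i + 1))) :
    w ∉ Set.range u := by
  rintro ⟨l, rfl⟩
  obtain ⟨hil, hgap⟩ := hu.mem_cyclicIoo_iff.1 hw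
  exact (hgap l (hu.strictMono_sub.lt_iff_lt.1 hil)).false

lemma existsUnique_mem_cyclicIoo (hu : IsClockwise u) (hw : w ∉ Set.range u) :
    ∃! i, w ∈ cyclicIoo (u i) (u (i + 1)) := by
  simp only [hu.mem_cyclicIoo_iff]
  refine existsUnique_lt_and_forall_gt ⟨0, ?_⟩ ?_
  · rw [sub_self, Fin.pos_iff_ne_zero, sub_ne_zero]
    exact fun h => hw ⟨0, h.symm⟩
  · rintro ⟨i, hi⟩
    exact hw ⟨i, sub_left_inj.1 hi⟩

lemma eq_of_mem_cyclicIoo (hu : IsClockwise u) {i' : Fin (j + 1)}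
    (hw : w ∈ cyclicIoo (u i) (u (i + 1))) (hw' : w ∈ cyclicIoo (u i') (u (i' + 1))) : i = i' :=
  (hu.existsUnique_mem_cyclicIoo (hu.notMem_range_of_mem_cyclicIoo hw)).unique hw hw'

lemma eq_of_mem_cyclicIoo_of_add_one_mem (hu : IsClockwise u) {i' : Fin (j + 1)}
    (hw : w ∈ cyclicIoo (u i) (u (i + 1))) (hw' : w + 1 ∈ cyclicIoo (u i') (u (i' + 1))) :
    i = i' := by
  obtain h | h := add_one_mem_cyclicIoo_or_eq hw
  · exact hu.eq_of_mem_cyclicIoo h hw'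
  · exact absurd ⟨i + 1, h.symm⟩ (hu.notMem_range_of_mem_cyclicIoo hw')

/-- The vertices outside a clockwise family, sorted by the arc of the family that contains them. -/
noncomputable def sigmaCSegEquiv (hu : IsClockwise u) :
    (Σ i, CSegIdx (u i) (u (i + 1))) ≃ {w // w ∉ Finset.univ.image u} :=
  Equiv.ofBijective
    (fun p => ⟨p.2.val, by simpa using hu.notMem_range_of_mem_cyclicIoo p.2.property⟩) <| by
    constructor
    · rintro ⟨i, w, hw⟩ ⟨i', w', hw'⟩ h
      obtain rfl : w = w' := congrArg Subtype.val h
      obtain rfl : i = i' := hu.eq_of_mem_cyclicIoo hw hw'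
      rfl
    · rintro ⟨w, hw⟩
      obtain ⟨i, hi, -⟩ := hu.existsUnique_mem_cyclicIoo (w := w) (by simpa using hw)
      exact ⟨⟨i, w, hi⟩, rfl⟩

end IsClockwise

lemma exists_isClockwise_image_eq [NeZero N] {S : Finset (Fin N)} (hS : S.Nonempty) :
    ∃ j, ∃ u : Fin (j + 1) → Fin N, IsClockwise u ∧ Finset.univ.image u = S := by
  obtain ⟨s, hs⟩ := hS
  let T := S.image (· - s)
  have hzero : 0 ∈ T := Finset.mem_image.2 ⟨s, hs, sub_self s⟩
  obtain ⟨j, hj⟩ := Nat.exists_eq_succ_of_ne_zero (Finset.card_ne_zero_of_mem hzero)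
  let t := T.orderEmbOfFin hj
  have ht0 : t 0 = 0 := by
    obtain ⟨i, hi⟩ : 0 ∈ Set.range t := (T.range_orderEmbOfFin hj).symm ▸ hzero
    exact nonpos_iff_eq_zero.1 (hi ▸ t.monotone (Fin.zero_le i))
  refine ⟨j, fun i => t i + s, fun a b hab => ?_, ?_⟩
  · simpa only [ht0, zero_add, add_sub_cancel_right] using t.strictMono hab
  · calc Finset.univ.image (fun i => t i + s) = (Finset.univ.image t).image (· + s) := by
          rw [Finset.image_image]; rfl
      _ = (S.image (· - s)).image (· + s) := by rw [T.image_orderEmbOfFin_univ hj]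
      _ = S := by simp [Finset.image_image, Function.comp_def]

end Clockwise

section RingSupported

variable {N : ℕ} [NeZero N] {R : Type*} {L : Matrix (Fin N) (Fin N) R}

/-- The zero pattern of a ring Laplacian, which makes its grounded Laplacians block diagonal: off
the diagonal, `L` is supported on the edges of the ring. -/
def IsRingSupported [Zero R] (L : Matrix (Fin N) (Fin N) R) : Prop :=
  ∀ i j, i ≠ j → j ≠ i + 1 → j ≠ i - 1 → L i j = 0

lemma IsRingSupported.apply_eq_zero_of_mem_cyclicIoo [Zero R] (hL : IsRingSupported L) {j : ℕ}
    {u : Fin (j + 1) → Fin N} (hu : IsClockwise u) {i i' : Fin (j + 1)} {w w' : Fin N}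
    (hw : w ∈ cyclicIoo (u i) (u (i + 1))) (hw' : w' ∈ cyclicIoo (u i') (u (i' + 1)))
    (hne : i ≠ i') : L w w' = 0 := by
  refine hL w w' ?_ ?_ ?_
  · rintro rfl
    exact hne (hu.eq_of_mem_cyclicIoo hw hw')
  · rintro rfl
    exact hne (hu.eq_of_mem_cyclicIoo_of_add_one_mem hw hw')
  · rintro rfl
    exact hne (hu.eq_of_mem_cyclicIoo_of_add_one_mem hw' (by rwa [sub_add_cancel])).symm

/-- The analogue of `cseg` for matrices over any coefficients. -/
def arcBlock (L : Matrix (Fin N) (Fin N) R) (u v : Fin N) :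
    Matrix (CSegIdx u v) (CSegIdx u v) R :=
  L.submatrix (·.val) (·.val)

lemma IsRingSupported.trace_inv_submatrix_compl [CommRing R] (hL : IsRingSupported L) {j : ℕ}
    {u : Fin (j + 1) → Fin N} (hu : IsClockwise u)
    (hdet : ∀ i, IsUnit (arcBlock L (u i) (u (i + 1))).det) :
    (L.submatrix (fun w : {w // w ∉ Finset.univ.image u} => w.val) (·.val))⁻¹.trace =
      ∑ i, (arcBlock L (u i) (u (i + 1)))⁻¹.trace :=
  trace_inv_eq_sum_trace_inv_blocks _ hu.sigmaCSegEquiv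
    (fun p q => hL.apply_eq_zero_of_mem_cyclicIoo hu p.2.property q.2.property) hdet

theorem ring_coherence_leader_selection_general [CommRing R] (c : R) (k : ℕ)
    (L : Matrix (Fin N) (Fin N) R) (hL : IsRingSupported L)
    (hdet : ∀ u v, IsUnit (arcBlock L u v).det) :
    { x : R | ∃ S : Finset (Fin N), S.Nonempty ∧ S.card ≤ k ∧
        x = c * (L.submatrix (fun w : {w // w ∉ S} => w.val) (·.val))⁻¹.trace } =
    { x : R | ∃ j : ℕ, j + 1 ≤ k ∧ ∃ u : Fin (j + 1) → Fin N, IsClockwise u ∧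
        x = ∑ i, c * (arcBlock L (u i) (u (i + 1)))⁻¹.trace } := by
  have trace_eq {j : ℕ} {u : Fin (j + 1) → Fin N} (hu : IsClockwise u) :=
    hL.trace_inv_submatrix_compl hu fun i => hdet (u i) (u (i + 1))
  ext x
  simp only [Set.mem_ofPred_eq, ← Finset.mul_sum]
  constructor
  · rintro ⟨S, hne, hcard, rfl⟩
    obtain ⟨j, u, hu, rfl⟩ := exists_isClockwise_image_eq hne
    exact ⟨j, hu.card_image ▸ hcard, u, hu, by rw [trace_eq hu]⟩
  · rintro ⟨j, hj, u, hu, rfl⟩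
    exact ⟨Finset.univ.image u, Finset.univ_nonempty.image u, hu.card_image.trans_le hj,
      by rw [trace_eq hu]⟩

end RingSupported

namespace IsRingLaplacian

variable {n : ℕ} {L : Matrix (Fin (n + 3)) (Fin (n + 3)) ℝ}

lemma isRingSupported (hL : IsRingLaplacian L) : IsRingSupported L :=
  hL.2.2.1

lemma apply_nonpos_of_ne (hL : IsRingLaplacian L) {i j : Fin (n + 3)} (hij : i ≠ j) :
    L i j ≤ 0 := by
  obtain ⟨-, hneg, hzero, -⟩ := hL
  by_cases hadj : j = i + 1 ∨ j = i - 1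
  · exact (hneg i j hadj).le
  · rw [not_or] at hadj
    exact (hzero i j hij hadj.1 hadj.2).le

lemma isUnit_det_cseg (hL : IsRingLaplacian L) (u v : Fin (n + 3)) : IsUnit (cseg L u v).det := by
  refine (det_submatrix_ne_zero_of_reachable (fun _ _ => hL.apply_nonpos_of_ne)
    (fun i => (hL.2.2.2 i).ge) Subtype.val_injective fun i => ⟨u, ?_, ?_⟩).isUnit
  · rintro ⟨w, hw⟩
    exact left_notMem_cyclicIoo (hw ▸ w.property)
  · exact reflTransGen_of_add_one (fun a => hL.2.1 a (a + 1) (Or.inl rfl)) i u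

end IsRingLaplacian

/-- for a weighted ring Laplacian on `n + 3` vertices and `1 ≤ k ≤ n + 3`,
the minimum of `(1/2)·tr(L_ff⁻¹)` over all nonempty leader sets `S` with `|S| ≤ k` equals
the minimum over all `j ∈ {1,…,k}` (written `j'+1 ≤ k`) and all families of `j'+1`
distinct vertices listed in clockwise cyclic order of the sum of the cyclic segment
contributions. -/
theorem ring_coherence_leader_selection {n k : ℕ} (hk1 : 1 ≤ k) (hkn : k ≤ n + 3)
    (L : Matrix (Fin (n + 3)) (Fin (n + 3)) ℝ) (hL : IsRingLaplacian L) :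
    sInf { x : ℝ | ∃ S : Finset (Fin (n + 3)), S.Nonempty ∧ S.card ≤ k ∧
        x = (1 / 2) * ((grounded L S)⁻¹).trace } =
    sInf { x : ℝ | ∃ j : ℕ, j + 1 ≤ k ∧ ∃ u : Fin (j + 1) → Fin (n + 3),
        (StrictMono fun i : Fin (j + 1) => (u i - u 0).val) ∧
        x = ∑ i : Fin (j + 1), (1 / 2) * ((cseg L (u i) (u (i + 1)))⁻¹).trace } :=
  congrArg sInf <|
    ring_coherence_leader_selection_general _ k L hL.isRingSupported hL.isUnit_det_cseg
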